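/- Let ε be any function from the (finite) set P^{h,cf}_d(K_{2d}) of homogeneous cycle-free edge d-partitions of K_{2d} to k, and define D_ε(A) = Σ_{Γ ∈ P^{h,cf}_d(K_{2d})} ε(Γ)·M_Γ(A) for d×d(2d-1) matrices A. Then D_ε(I^{S^2}_d) = ε(Γ^E), and for every S^2-upper triangular d×d(2d-1) matrix A one has D_ε(A) = D_ε(I^{S^2}_d) · ∏_{1 ≤ i < j ≤ 2d} A^{ind(i,j)}_{i,j}; that is, D_ε(A) equals D_ε(I^{S^2}_d) times the product of the S^2-diagonal of A. -/

import Mathlib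

open SimpleGraph

/-- Vertices of `K_{2d}` are `Fin (2*d)`, with `v : Fin (2*d)` representing the
1-based vertex `v + 1`.  For `i < j`, `indF i j` is the 0-based version of the index
`ind(i+1, j+1)`, where (1-based) `ind(x,y) = ⌈x/2⌉` if `x + y` is even and `⌈y/2⌉` if
`x + y` is odd. -/
def indF {d : ℕ} (i j : Fin (2*d)) : Fin d :=
  if ((i : ℕ) + (j : ℕ)) % 2 = 0 then ⟨(i : ℕ) / 2, by have := i.isLt; omega⟩
  else ⟨(j : ℕ) / 2, by have := j.isLt; omega⟩

/-- Column indices of a `d × d(2d-1)` matrix: pairs `(i,j)` with `i < j` in `Fin (2*d)`. -/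
abbrev EdgePair (d : ℕ) := {p : Fin (2*d) × Fin (2*d) // p.1 < p.2}

def ind {d : ℕ} (e : EdgePair d) : Fin d := indF e.val.1 e.val.2

/-- An edge `d`-partition of `K_{2d}`: spanning subgraphs with pairwise disjoint edge
sets whose union is the edge set of the complete graph. -/
def IsEdgePartition {d : ℕ} (Γ : Fin d → SimpleGraph (Fin (2*d))) : Prop :=
  (∀ a b : Fin d, a ≠ b → Disjoint (Γ a).edgeSet (Γ b).edgeSet) ∧
  (⋃ a : Fin d, (Γ a).edgeSet) = (⊤ : SimpleGraph (Fin (2*d))).edgeSet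

/-- A homogeneous cycle-free edge `d`-partition of `K_{2d}`. -/
def IsHCFPartition {d : ℕ} (Γ : Fin d → SimpleGraph (Fin (2*d))) : Prop :=
  IsEdgePartition Γ ∧ (∀ a b : Fin d, (Γ a).edgeSet.ncard = (Γ b).edgeSet.ncard) ∧
  (∀ a : Fin d, (Γ a).IsAcyclic)

/-- The edge `d`-partition `Γ^E` associated with `E^{(2)}_d`:
`E(Γ^E_a) = {(i,j) : i < j, ind(i,j) = a}`. -/
def GammaE (d : ℕ) (a : Fin d) : SimpleGraph (Fin (2*d)) :=
  SimpleGraph.fromEdgeSet {e | ∃ i j : Fin (2*d), i < j ∧ indF i j = a ∧ e = s(i,j)}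

-- The monomial `M_Γ(A) = ∏_{a=1}^d ∏_{(i,j) ∈ E(Γ_a)} A^a_{i,j}`.
open scoped Classical in
noncomputable def MGamma {d : ℕ} {k : Type*} [Field k]
    (Γ : Fin d → SimpleGraph (Fin (2*d))) (A : Fin d → EdgePair d → k) : k :=
  ∏ a : Fin d, ∏ e : EdgePair d, if (Γ a).Adj e.val.1 e.val.2 then A a e else 1

/-- `A` is `S²`-upper triangular: entries strictly below the `S²`-diagonal vanish. -/
def S2UpperTriangular {d : ℕ} {k : Type*} [Field k] (A : Fin d → EdgePair d → k) : Prop :=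
  ∀ (r : Fin d) (e : EdgePair d), ind e < r → A r e = 0

/-- `A` is `S²`-lower triangular: entries strictly above the `S²`-diagonal vanish. -/
def S2LowerTriangular {d : ℕ} {k : Type*} [Field k] (A : Fin d → EdgePair d → k) : Prop :=
  ∀ (r : Fin d) (e : EdgePair d), r < ind e → A r e = 0

/-- The matrix form `I^{S²}_d` of `E^{(2)}_d`. -/
def IS2 (d : ℕ) (k : Type*) [Field k] : Fin d → EdgePair d → k :=
  fun r e => if r = ind e then 1 else 0

-- `D_ε(A) = Σ_{Γ ∈ P^{h,cf}_d(K_{2d})} ε(Γ)·M_Γ(A)`.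
open scoped Classical in
noncomputable def Deps {d : ℕ} {k : Type*} [Field k]
    (ε : (Fin d → SimpleGraph (Fin (2*d))) → k) (A : Fin d → EdgePair d → k) : k :=
  ∑ Γ ∈ Finset.univ.filter (fun Γ : Fin d → SimpleGraph (Fin (2*d)) => IsHCFPartition Γ),
    ε Γ * MGamma Γ A

/-!
An edge partition of `K_{2d}` is the family of colour classes of a colouring `c` of the edges by
`Fin d`, and `Γ^E` is the family attached to the colouring `ind`. The monomial of `c` evaluated
at an upper triangular matrix vanishes unless `c ≤ ind` pointwise. If moreover the partition is
homogeneous, then `c` and `ind` use every colour equally often, and two such functions with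
`c ≤ ind` coincide. So only the term of `Γ^E` survives in `D_ε(A)`.

That this term does occur in the sum is seen as follows: in `Γ^E_a` every vertex is adjacent to
`2a` or to `2a + 1` (vertices counted from `0`), so `Γ^E_a` is connected; and `d` connected
graphs which partition the `d (2d - 1)` edges of `K_{2d}` must all be trees.
-/

section Generalities

theorem eq_of_le_of_ncard_fiber_eq {α β : Type*} [Finite α] [PartialOrder β] {f g : α → β}
    (hle : f ≤ g) (hcard : ∀ b, (f ⁻¹' {b}).ncard = (g ⁻¹' {b}).ncard) : f = g := by
  have fiberEquiv (b : β) : {x // f x = b} ≃ {x // g x = b} :=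
    (Finite.equivFinOfCardEq (hcard b)).trans (Finite.equivFin _).symm
  obtain ⟨σ, hσ⟩ : ∃ σ : Equiv.Perm α, ∀ x, g (σ x) = f x :=
    ⟨_, Equiv.ofFiberEquiv_map fiberEquiv⟩
  have sublevel_eq (b : β) : {x | g x ≤ b} = {x | f x ≤ b} := by
    refine Set.eq_of_subset_of_ncard_le (fun x hx ↦ (hle x).trans hx) ?_
    exact Set.ncard_le_ncard_of_injOn σ (fun x hx ↦ (hσ x).trans_le hx) σ.injective.injOn
  funext x
  have hx : x ∈ {y | g y ≤ f x} := sublevel_eq (f x) ▸ le_refl (f x)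
  exact (hle x).antisymm hx

theorem connected_of_forall_adj_or_adj {V : Type*} {G : SimpleGraph V} {u w : V}
    (h : ∀ v, G.Adj u v ∨ G.Adj w v) : G.Connected := by
  have huw : G.Adj u w := ((h u).resolve_left G.irrefl).symm
  refine (connected_iff_exists_forall_reachable G).2 ⟨u, fun v ↦ ?_⟩
  rcases h v with huv | hwv
  · exact huv.reachable
  · exact huw.reachable.trans hwv.reachable

theorem ncard_edgeSet_top (V : Type*) [Finite V] :
    (⊤ : SimpleGraph V).edgeSet.ncard = (Nat.card V).choose 2 := by
  classical
  have := Fintype.ofFinite V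
  rw [← coe_edgeFinset, Set.ncard_coe_finset, card_edgeFinset_top_eq_card_choose_two,
    Nat.card_eq_fintype_card]

end Generalities

section EdgeColoring

variable {V ι : Type*} [LinearOrder V]

/-- The edge of the complete graph on `V` joining the two entries of an increasing pair. -/
def edgeOfPair (e : {p : V × V // p.1 < p.2}) : Sym2 V := s(e.1.1, e.1.2)

theorem edgeOfPair_injective : Function.Injective (edgeOfPair (V := V)) := by
  rintro ⟨⟨i, j⟩, hij⟩ ⟨⟨i', j'⟩, hij'⟩ h
  rcases Sym2.eq_iff.1 h with ⟨rfl, rfl⟩ | ⟨rfl, rfl⟩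
  · rfl
  · exact absurd hij (lt_asymm hij')

theorem range_edgeOfPair : Set.range (edgeOfPair (V := V)) = (⊤ : SimpleGraph V).edgeSet := by
  ext z
  induction z using Sym2.ind with
  | _ x y =>
    refine ⟨fun ⟨e, he⟩ ↦ he ▸ e.2.ne, fun hxy ↦ ?_⟩
    rcases lt_or_gt_of_ne (show x ≠ y from hxy) with h | h
    · exact ⟨⟨(x, y), h⟩, rfl⟩
    · exact ⟨⟨(y, x), h⟩, Sym2.eq_swap⟩

/-- The graph formed by the edges of colour `a`, for a colouring `c` of the edges of the complete
graph on `V`, an edge being encoded as the increasing pair of its ends. -/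
def edgeColorClass (c : {p : V × V // p.1 < p.2} → ι) (a : ι) : SimpleGraph V :=
  fromEdgeSet (edgeOfPair '' (c ⁻¹' {a}))

theorem edgeSet_edgeColorClass (c : {p : V × V // p.1 < p.2} → ι) (a : ι) :
    (edgeColorClass c a).edgeSet = edgeOfPair '' (c ⁻¹' {a}) := by
  rw [edgeColorClass, edgeSet_fromEdgeSet, sdiff_eq_left, ← Set.subset_compl_iff_disjoint_right,
    ← edgeSet_top, ← range_edgeOfPair]
  exact Set.image_subset_range _ _

theorem edgeColorClass_adj (c : {p : V × V // p.1 < p.2} → ι) (a : ι)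
    (e : {p : V × V // p.1 < p.2}) : (edgeColorClass c a).Adj e.1.1 e.1.2 ↔ c e = a := by
  rw [← mem_edgeSet, edgeSet_edgeColorClass]
  exact edgeOfPair_injective.mem_set_image

theorem ncard_edgeSet_edgeColorClass (c : {p : V × V // p.1 < p.2} → ι) (a : ι) :
    (edgeColorClass c a).edgeSet.ncard = (c ⁻¹' {a}).ncard := by
  rw [edgeSet_edgeColorClass, Set.ncard_image_of_injective _ edgeOfPair_injective]

end EdgeColoring

section EdgePartition

variable {d : ℕ} {Γ : Fin d → SimpleGraph (Fin (2 * d))}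

theorem isEdgePartition_edgeColorClass (c : EdgePair d → Fin d) :
    IsEdgePartition (edgeColorClass c) := by
  simp only [IsEdgePartition, edgeSet_edgeColorClass]
  refine ⟨fun a b hab ↦ ?_, ?_⟩
  · exact Set.disjoint_image_of_injective edgeOfPair_injective
      ((Set.disjoint_singleton.2 hab).preimage c)
  · rw [← Set.image_iUnion, ← Set.preimage_iUnion, Set.iUnion_of_singleton, Set.preimage_univ,
      Set.image_univ, range_edgeOfPair]

theorem IsEdgePartition.exists_eq_edgeColorClass (hΓ : IsEdgePartition Γ) :
    ∃ c : EdgePair d → Fin d, Γ = edgeColorClass c := by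
  obtain ⟨hdisj, hcover⟩ := hΓ
  have exists_color (e : EdgePair d) : ∃ a, edgeOfPair e ∈ (Γ a).edgeSet := by
    rw [← Set.mem_iUnion, hcover, ← range_edgeOfPair]
    exact Set.mem_range_self e
  choose c hc using exists_color
  refine ⟨c, funext fun a ↦ edgeSet_injective ?_⟩
  rw [edgeSet_edgeColorClass]
  refine Set.Subset.antisymm (fun z hz ↦ ?_) ?_
  · obtain ⟨e, rfl⟩ : z ∈ Set.range edgeOfPair := by
      rw [range_edgeOfPair, ← hcover]
      exact Set.mem_iUnion_of_mem a hz
    refine ⟨e, ?_, rfl⟩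
    by_contra hne
    exact Set.disjoint_left.1 (hdisj _ _ hne) (hc e) hz
  · rintro _ ⟨e, rfl, rfl⟩
    exact hc e

theorem IsEdgePartition.sum_ncard_edgeSet (hΓ : IsEdgePartition Γ) :
    ∑ a, (Γ a).edgeSet.ncard = d * (2 * d - 1) := by
  rw [← finsum_eq_sum_of_fintype, ← Set.ncard_iUnion_of_finite (fun _ ↦ Set.toFinite _)
    fun a b hab ↦ hΓ.1 a b hab, hΓ.2, ncard_edgeSet_top, Nat.card_fin, Nat.choose_two_right,
    Nat.mul_assoc, Nat.mul_div_cancel_left _ two_pos]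

theorem IsEdgePartition.ncard_edgeSet_of_homogeneous (hΓ : IsEdgePartition Γ)
    (hhom : ∀ a b, (Γ a).edgeSet.ncard = (Γ b).edgeSet.ncard) (a : Fin d) :
    (Γ a).edgeSet.ncard = 2 * d - 1 := by
  have hsum := hΓ.sum_ncard_edgeSet
  simp only [fun b ↦ hhom b a, Finset.sum_const, Finset.card_univ, Fintype.card_fin,
    smul_eq_mul] at hsum
  exact Nat.eq_of_mul_eq_mul_left a.pos hsum

theorem IsEdgePartition.isTree_of_connected (hΓ : IsEdgePartition Γ)
    (hconn : ∀ a, (Γ a).Connected) (a : Fin d) : (Γ a).IsTree := by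
  have le_ncard (b : Fin d) : 2 * d - 1 ≤ (Γ b).edgeSet.ncard := by
    have h := (hconn b).card_vert_le_card_edgeSet_add_one
    rw [Nat.card_fin, Nat.card_coe_set_eq] at h
    lia
  have hsum : ∑ _b : Fin d, (2 * d - 1) = ∑ b, (Γ b).edgeSet.ncard := by
    simp [hΓ.sum_ncard_edgeSet]
  have hcard : 2 * d - 1 = (Γ a).edgeSet.ncard :=
    (Finset.sum_eq_sum_iff_of_le fun b _ ↦ le_ncard b).1 hsum a (Finset.mem_univ a)
  refine isTree_iff_connected_and_card.2 ⟨hconn a, ?_⟩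
  rw [Nat.card_fin, Nat.card_coe_set_eq, ← hcard]
  have := a.pos
  lia

theorem IsEdgePartition.isHCFPartition_of_connected (hΓ : IsEdgePartition Γ)
    (hconn : ∀ a, (Γ a).Connected) : IsHCFPartition Γ := by
  have htree := hΓ.isTree_of_connected hconn
  refine ⟨hΓ, fun a b ↦ ?_, fun a ↦ (htree a).isAcyclic⟩
  have ha := (isTree_iff_connected_and_card.1 (htree a)).2
  have hb := (isTree_iff_connected_and_card.1 (htree b)).2
  exact Nat.add_right_cancel (ha.trans hb.symm)

end EdgePartition

section GammaE

variable {d : ℕ}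

theorem gammaE_eq_edgeColorClass (d : ℕ) : GammaE d = edgeColorClass ind := by
  funext a
  refine congrArg fromEdgeSet (Set.ext fun z ↦ ⟨?_, ?_⟩)
  · rintro ⟨i, j, hij, ha, rfl⟩
    exact ⟨⟨(i, j), hij⟩, ha, rfl⟩
  · rintro ⟨e, ha, rfl⟩
    exact ⟨e.1.1, e.1.2, e.2, ha, rfl⟩

theorem indF_eq_iff {i j : Fin (2 * d)} {a : Fin d} :
    indF i j = a ↔ if (i + j : ℕ) % 2 = 0 then (i : ℕ) / 2 = a else (j : ℕ) / 2 = a := by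
  unfold indF
  split_ifs <;> exact Fin.ext_iff

theorem gammaE_adj {a : Fin d} {i j : Fin (2 * d)} :
    (GammaE d a).Adj i j ↔ i < j ∧ indF i j = a ∨ j < i ∧ indF j i = a := by
  rcases lt_trichotomy i j with h | rfl | h
  · simpa [gammaE_eq_edgeColorClass, h, h.not_gt, ind] using
      edgeColorClass_adj ind a (⟨(i, j), h⟩ : EdgePair d)
  · simp
  · simpa [gammaE_eq_edgeColorClass, h, h.not_gt, ind, adj_comm] using
      edgeColorClass_adj ind a (⟨(j, i), h⟩ : EdgePair d)

theorem gammaE_connected (a : Fin d) : (GammaE d a).Connected := by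
  let u : Fin (2 * d) := ⟨2 * a, by lia⟩
  let w : Fin (2 * d) := ⟨2 * a + 1, by lia⟩
  refine connected_of_forall_adj_or_adj (u := u) (w := w) fun v ↦ ?_
  simp only [gammaE_adj, indF_eq_iff, Fin.lt_def, u, w]
  lia

theorem isHCFPartition_gammaE (d : ℕ) : IsHCFPartition (GammaE d) := by
  have hpart : IsEdgePartition (GammaE d) :=
    gammaE_eq_edgeColorClass d ▸ isEdgePartition_edgeColorClass ind
  exact hpart.isHCFPartition_of_connected gammaE_connected

theorem ncard_ind_fiber (a : Fin d) : (ind ⁻¹' {a} : Set (EdgePair d)).ncard = 2 * d - 1 := by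
  obtain ⟨hpart, hhom, -⟩ := isHCFPartition_gammaE d
  rw [← ncard_edgeSet_edgeColorClass, ← gammaE_eq_edgeColorClass]
  exact hpart.ncard_edgeSet_of_homogeneous hhom a

theorem eq_ind_of_le_of_homogeneous {c : EdgePair d → Fin d} (hle : c ≤ ind)
    (hhom : ∀ a b, (edgeColorClass c a).edgeSet.ncard = (edgeColorClass c b).edgeSet.ncard) :
    c = ind := by
  refine eq_of_le_of_ncard_fiber_eq hle fun a ↦ ?_
  rw [ncard_ind_fiber, ← ncard_edgeSet_edgeColorClass]
  exact (isEdgePartition_edgeColorClass c).ncard_edgeSet_of_homogeneous hhom a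

end GammaE

section Monomial

variable {d : ℕ} {k : Type*} [Field k] {A : Fin d → EdgePair d → k}

theorem mGamma_edgeColorClass (c : EdgePair d → Fin d) (A : Fin d → EdgePair d → k) :
    MGamma (edgeColorClass c) A = ∏ e, A (c e) e := by
  classical
  simp only [MGamma, edgeColorClass_adj]
  rw [Finset.prod_comm]
  exact Finset.prod_congr rfl fun e _ ↦ Fintype.prod_ite_eq (c e) fun a ↦ A a e

theorem mGamma_gammaE (A : Fin d → EdgePair d → k) :
    MGamma (GammaE d) A = ∏ e, A (ind e) e := by
  rw [gammaE_eq_edgeColorClass, mGamma_edgeColorClass]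

theorem S2UpperTriangular.mGamma_eq_zero (hA : S2UpperTriangular A)
    {Γ : Fin d → SimpleGraph (Fin (2 * d))} (hΓ : IsHCFPartition Γ) (hne : Γ ≠ GammaE d) :
    MGamma Γ A = 0 := by
  obtain ⟨hpart, hhom, -⟩ := hΓ
  obtain ⟨c, rfl⟩ := hpart.exists_eq_edgeColorClass
  obtain ⟨e, he⟩ : ∃ e, ind e < c e := by
    by_contra! hle
    exact hne (eq_ind_of_le_of_homogeneous hle hhom ▸ (gammaE_eq_edgeColorClass d).symm)
  rw [mGamma_edgeColorClass]
  exact Finset.prod_eq_zero (Finset.mem_univ e) (hA _ e he)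

theorem S2UpperTriangular.deps_eq (hA : S2UpperTriangular A)
    (ε : (Fin d → SimpleGraph (Fin (2 * d))) → k) :
    Deps ε A = ε (GammaE d) * ∏ e, A (ind e) e := by
  classical
  rw [Deps, Finset.sum_eq_single_of_mem (GammaE d), mGamma_gammaE]
  · simpa using isHCFPartition_gammaE d
  · intro Γ hΓ hne
    rw [hA.mGamma_eq_zero (Finset.mem_filter.1 hΓ).2 hne, mul_zero]

theorem s2UpperTriangular_IS2 (d : ℕ) (k : Type*) [Field k] : S2UpperTriangular (IS2 d k) :=
  fun _ _ h ↦ if_neg h.ne'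

theorem deps_IS2 (ε : (Fin d → SimpleGraph (Fin (2 * d))) → k) :
    Deps ε (IS2 d k) = ε (GammaE d) := by
  simp [(s2UpperTriangular_IS2 d k).deps_eq, IS2]

end Monomial

/-- For any ε : P^{h,cf}_d(K_{2d}) → k, one has D_ε(I^{S²}_d) = ε(Γ^E), and for every
S²-upper triangular A, D_ε(A) = D_ε(I^{S²}_d) · (product of the S²-diagonal of A). -/
theorem Deps_upper_triangular (k : Type*) [Field k] (d : ℕ) (hd : 1 ≤ d)
    (ε : (Fin d → SimpleGraph (Fin (2*d))) → k) :
    Deps ε (IS2 d k) = ε (fun a : Fin d => GammaE d a) ∧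
    ∀ A : Fin d → EdgePair d → k, S2UpperTriangular A →
      Deps ε A = Deps ε (IS2 d k) * ∏ e : EdgePair d, A (ind e) e := by
  refine ⟨deps_IS2 ε, fun A hA ↦ ?_⟩
  rw [hA.deps_eq, deps_IS2]
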